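/- Let G be a group with finite generating set and word metric, of type FP_m. Then Σ^m(G;ℤ) is an open cone in Hom(G,ℝ): the set {χ ∈ Hom(G,ℝ) : χ ≠ 0 and χ ∈ Σ^m(G;ℤ)} is open in Hom(G,ℝ) with the topology of pointwise convergence, and for every real λ > 0 and every character χ, one has χ ∈ Σ^m(G;ℤ) if and only if λχ ∈ Σ^m(G;ℤ). -/

import Mathlib

open Finsupp

variable {G : Type*} [Group G]

/-- Word length with respect to a generating set `X`. -/
noncomputable def wordLength (X : Finset G) (g : G) : ℕ :=
  sInf {n : ℕ | ∃ w : List G, w.length = n ∧ (∀ x ∈ w, x ∈ X ∨ x⁻¹ ∈ X) ∧ w.prod = g}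

/-- The left-invariant word metric `d(g,h) = l(g⁻¹h)`. -/
noncomputable def wordDist (X : Finset G) (g h : G) : ℕ :=
  wordLength X (g⁻¹ * h)

/-- `c` is a chain in `C_q^k(S)`: its support consists of `(q+1)`-tuples of elements of `S`
that are pairwise at distance at most `k`. -/
def VRChain (X : Finset G) (S : Set G) (q k : ℕ) (c : (Fin (q + 1) → G) →₀ ℤ) : Prop :=
  ∀ σ ∈ c.support, (∀ i, σ i ∈ S) ∧ ∀ i j, wordDist X (σ i) (σ j) ≤ k

/-- The simplicial boundary map `∂_{q+1} : ℤ[G^{q+2}] → ℤ[G^{q+1}]`. -/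
noncomputable def bnd (q : ℕ) :
    ((Fin (q + 2) → G) →₀ ℤ) →ₗ[ℤ] ((Fin (q + 1) → G) →₀ ℤ) :=
  Finsupp.lift _ ℤ _
    (fun σ => ∑ i : Fin (q + 2), ((-1 : ℤ) ^ (i : ℕ)) • Finsupp.single (σ ∘ i.succAbove) (1 : ℤ))

/-- The augmentation `ε : ℤ[G] → ℤ` sending every vertex to `1`. -/
noncomputable def aug : ((Fin 1 → G) →₀ ℤ) →ₗ[ℤ] ℤ :=
  Finsupp.lift ℤ ℤ (Fin 1 → G) (fun _ => (1 : ℤ))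

/-- Reduced `q`-cycles at scale `k` on `S` bound at scale `l` on `S`. -/
def BoundsAt (X : Finset G) (S : Set G) : ℕ → ℕ → ℕ → Prop
  | 0, k, l => ∀ z : (Fin 1 → G) →₀ ℤ, VRChain X S 0 k z → aug z = 0 →
      ∃ c : (Fin 2 → G) →₀ ℤ, VRChain X S 1 l c ∧ bnd 0 c = z
  | (q + 1), k, l => ∀ z : (Fin (q + 2) → G) →₀ ℤ, VRChain X S (q + 1) k z → bnd q z = 0 →
      ∃ c : (Fin (q + 3) → G) →₀ ℤ, VRChain X S (q + 2) l c ∧ bnd (q + 1) c = z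

/-- `S ⊆ G` is of type `FP_m`. -/
def TypeFP (X : Finset G) (S : Set G) (m : ℕ) : Prop :=
  ∀ q < m, ∀ k : ℕ, ∃ l ≥ k, BoundsAt X S q k l

/-- A character on `G` is a homomorphism to the additive reals. -/
def IsCharacter (χ : G → ℝ) : Prop :=
  ∀ g h : G, χ (g * h) = χ g + χ h

/-- Simultaneous left translation on chains, making `ℤ[G^{q+1}]` a `ℤG`-module. -/
noncomputable def lTranslate (g : G) (q : ℕ) :
    ((Fin (q + 1) → G) →₀ ℤ) →ₗ[ℤ] ((Fin (q + 1) → G) →₀ ℤ) :=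
  Finsupp.lmapDomain ℤ ℤ (fun σ i => g * σ i)

/-- A chain endomorphism of `ℤG`-complexes on `(C_q^k(G))_{q=0,…,m}` extending the identity
on `ℤ`: each `φ q` maps scale-`k` chains to scale-`k` chains, is `G`-equivariant,
satisfies `ε ∘ φ₀ = ε` and commutes with the boundary maps. -/
def IsChainEndo (X : Finset G) (k m : ℕ)
    (φ : ∀ q : ℕ, ((Fin (q + 1) → G) →₀ ℤ) →ₗ[ℤ] ((Fin (q + 1) → G) →₀ ℤ)) : Prop :=
  (∀ q ≤ m, ∀ c, VRChain X Set.univ q k c → VRChain X Set.univ q k (φ q c)) ∧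
  (∀ q ≤ m, ∀ (g : G) (c), VRChain X Set.univ q k c →
    φ q (lTranslate g q c) = lTranslate g q (φ q c)) ∧
  (∀ c : (Fin 1 → G) →₀ ℤ, VRChain X Set.univ 0 k c → aug (φ 0 c) = aug c) ∧
  (∀ q : ℕ, q + 1 ≤ m → ∀ c : (Fin (q + 2) → G) →₀ ℤ, VRChain X Set.univ (q + 1) k c →
    bnd q (φ (q + 1) c) = φ q (bnd q c))

/-- The valuation of a simplex: `v(σ) = min_i χ(g_i)` (with values in `EReal`). -/
noncomputable def vsimp (χ : G → ℝ) {q : ℕ} (σ : Fin (q + 1) → G) : EReal :=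
  ⨅ i, (χ (σ i) : EReal)

/-- The valuation of a chain: the minimum of the valuations of the simplices in its support
(`⊤` for the zero chain). -/
noncomputable def vchain (χ : G → ℝ) {q : ℕ} (c : (Fin (q + 1) → G) →₀ ℤ) : EReal :=
  ⨅ σ ∈ c.support, vsimp χ σ

set_option linter.unusedSectionVars false

/-- The group of (unbounded scale) `q`-chains on `G`. -/
abbrev Chain (G : Type*) (q : ℕ) := (Fin (q + 1) → G) →₀ ℤ

/-- The simplices of the Vietoris–Rips complex of `S` at scale `k`. -/
def ripsSimplices (X : Finset G) (S : Set G) (q k : ℕ) : Set (Fin (q + 1) → G) :=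
  {σ | (∀ i, σ i ∈ S) ∧ ∀ i j, wordDist X (σ i) (σ j) ≤ k}

/-- The simplices with vertices in `S`. -/
def simplicesIn (S : Set G) (q : ℕ) : Set (Fin (q + 1) → G) := {σ | ∀ i, σ i ∈ S}

/-- The upper half space `{χ ≥ r}`. -/
def halfSpace (χ : G → ℝ) (r : ℝ) : Set G := {g | r ≤ χ g}

/-- Reduced cycles. -/
def IsCyc : ∀ q : ℕ, Chain G q → Prop
  | 0, z => aug z = 0
  | q + 1, z => bnd q z = 0

/-- Equivariance of a linear map between chain groups under left translation. -/
def Equivariant {p q : ℕ} (F : Chain G p →ₗ[ℤ] Chain G q) : Prop :=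
  ∀ g c, F (lTranslate g p c) = lTranslate g q (F c)

theorem vrChain_iff {X : Finset G} {S : Set G} {q k : ℕ} {c : Chain G q} :
    VRChain X S q k c ↔ c ∈ supported ℤ ℤ (ripsSimplices X S q k) :=
  Iff.rfl

theorem boundsAt_iff {X : Finset G} {S : Set G} {q k l : ℕ} :
    BoundsAt X S q k l ↔ ∀ z : Chain G q, VRChain X S q k z → IsCyc q z →
      ∃ c : Chain G (q + 1), VRChain X S (q + 1) l c ∧ bnd q c = z := by
  cases q <;> rfl

section LinearMap

variable {α M : Type*} [AddCommGroup M]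

theorem map_mem_of_supported {s : Set α} {N : Submodule ℤ M} {F : (α →₀ ℤ) →ₗ[ℤ] M}
    (h : ∀ σ ∈ s, F (single σ 1) ∈ N) {c : α →₀ ℤ} (hc : c ∈ supported ℤ ℤ s) : F c ∈ N := by
  rw [supported_eq_span_single] at hc
  have : Submodule.span ℤ ((fun i => single i (1 : ℤ)) '' s) ≤ N.comap F := by
    rw [Submodule.span_le]
    rintro _ ⟨σ, hσ, rfl⟩
    exact h σ hσ
  exact this hc

theorem map_eq_of_supported {s : Set α} {F F' : (α →₀ ℤ) →ₗ[ℤ] M}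
    (h : ∀ σ ∈ s, F (single σ 1) = F' (single σ 1)) {c : α →₀ ℤ} (hc : c ∈ supported ℤ ℤ s) :
    F c = F' c := by
  have : (F - F') c ∈ (⊥ : Submodule ℤ M) :=
    map_mem_of_supported (fun σ hσ => by simp [h σ hσ]) hc
  simpa [sub_eq_zero] using this

theorem map_eq_zero_of_single {F : (α →₀ ℤ) →ₗ[ℤ] M} (h : ∀ σ, F (single σ 1) = 0)
    (c : α →₀ ℤ) : F c = 0 :=
  map_eq_of_supported (F' := 0) (s := Set.univ) (fun σ _ => by simp [h σ]) (by simp)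

end LinearMap

section Chains

theorem bnd_single (q : ℕ) (σ : Fin (q + 2) → G) :
    bnd q (single σ 1) = ∑ i : Fin (q + 2), ((-1 : ℤ) ^ (i : ℕ)) • single (σ ∘ i.succAbove) 1 := by
  simp [bnd]

theorem aug_single (σ : Fin 1 → G) : aug (single σ 1) = 1 := by
  simp [aug]

theorem lTranslate_single (g : G) (q : ℕ) (σ : Fin (q + 1) → G) :
    lTranslate g q (single σ 1) = single (fun i => g * σ i) 1 := by
  simp [lTranslate]

theorem lTranslate_mul (g h : G) (q : ℕ) (c : Chain G q) :
    lTranslate (g * h) q c = lTranslate g q (lTranslate h q c) := by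
  refine map_eq_of_supported (F := lTranslate (g * h) q)
    (F' := lTranslate g q ∘ₗ lTranslate h q) (s := Set.univ) (fun σ _ => ?_) (by simp)
  simp [lTranslate_single, mul_assoc]

theorem lTranslate_one (q : ℕ) (c : Chain G q) : lTranslate 1 q c = c := by
  refine map_eq_of_supported (F := lTranslate 1 q)
    (F' := LinearMap.id) (s := Set.univ) (fun σ _ => ?_) (by simp)
  simp [lTranslate_single]

theorem bnd_equivariant (q : ℕ) : Equivariant (bnd (G := G) q) := by
  intro g c
  refine map_eq_of_supported (F := bnd q ∘ₗ lTranslate g (q + 1))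
    (F' := lTranslate g q ∘ₗ bnd q) (s := Set.univ) (fun σ _ => ?_) (by simp)
  simp only [LinearMap.comp_apply, lTranslate_single, bnd_single, map_sum, map_smul]
  rfl

theorem aug_lTranslate (g : G) (c : Chain G 0) : aug (lTranslate g 0 c) = aug c := by
  refine map_eq_of_supported (F := aug ∘ₗ lTranslate g 0)
    (F' := aug) (s := Set.univ) (fun σ _ => ?_) (by simp)
  simp [lTranslate_single, aug_single]

theorem IsCyc.lTranslate {q : ℕ} {z : Chain G q} (hz : IsCyc q z) (g : G) :
    IsCyc q (lTranslate g q z) := by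
  cases q with
  | zero => exact (aug_lTranslate g z).trans hz
  | succ q =>
    change bnd q z = 0 at hz
    change bnd q _ = 0
    rw [bnd_equivariant, hz, map_zero]

/-- The cone operator with apex `v`. -/
noncomputable def cone (v : G) (q : ℕ) : Chain G q →ₗ[ℤ] Chain G (q + 1) :=
  Finsupp.lmapDomain ℤ ℤ (fun σ => Fin.cons v σ)

theorem cone_single (v : G) (q : ℕ) (σ : Fin (q + 1) → G) :
    cone v q (single σ 1) = single (Fin.cons v σ : Fin (q + 2) → G) 1 := by
  simp [cone]

theorem bnd_cone_zero (v : G) (z : Chain G 0) :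
    bnd 0 (cone v 0 z) = z - aug z • single (fun _ => v) 1 := by
  refine map_eq_of_supported (F := bnd 0 ∘ₗ cone v 0)
    (F' := LinearMap.id - aug.smulRight (single (fun _ => v) 1)) (s := Set.univ)
    (fun σ _ => ?_) (by simp)
  have h1 : (Fin.cons v σ : Fin 2 → G) ∘ Fin.succAbove 1 = fun _ => v := by
    ext i; fin_cases i; rfl
  simp [cone_single, bnd_single, Fin.sum_univ_two, h1, aug_single, sub_eq_add_neg]

theorem bnd_cone_succ (v : G) (q : ℕ) (z : Chain G (q + 1)) :
    bnd (q + 1) (cone v (q + 1) z) = z - cone v q (bnd q z) := by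
  refine map_eq_of_supported (F := bnd (q + 1) ∘ₗ cone v (q + 1))
    (F' := LinearMap.id - cone v q ∘ₗ bnd q) (s := Set.univ) (fun σ _ => ?_) (by simp)
  have h0 : (Fin.cons v σ : Fin (q + 3) → G) ∘ Fin.succAbove 0 = σ := by
    ext i; simp
  have h1 : ∀ j : Fin (q + 2), (Fin.cons v σ : Fin (q + 3) → G) ∘ Fin.succAbove j.succ =
      Fin.cons v (σ ∘ j.succAbove) := by
    intro j
    ext i
    refine Fin.cases ?_ (fun i => ?_) i <;> simp
  simp only [LinearMap.comp_apply, LinearMap.sub_apply, LinearMap.id_apply, cone_single,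
    bnd_single, Fin.sum_univ_succ (n := q + 2), h0, h1, map_sum, map_smul]
  simp [pow_succ, sub_eq_add_neg]

theorem bnd_cone {q : ℕ} {z : Chain G q} (hz : IsCyc q z) (v : G) : bnd q (cone v q z) = z := by
  cases q with
  | zero =>
    change aug z = 0 at hz
    rw [bnd_cone_zero, hz, zero_smul, sub_zero]
  | succ q =>
    change bnd q z = 0 at hz
    rw [bnd_cone_succ, hz, map_zero, sub_zero]

theorem isCyc_bnd (q : ℕ) (c : Chain G (q + 1)) : IsCyc q (bnd q c) := by
  induction q with
  | zero =>
    refine map_eq_zero_of_single (F := aug ∘ₗ bnd 0) (fun σ => ?_) c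
    simp [bnd_single, Fin.sum_univ_two, aug_single]
  | succ q ih =>
    refine map_eq_zero_of_single (F := bnd q ∘ₗ bnd (q + 1)) (fun σ => ?_) c
    have h : single σ (1 : ℤ) = cone (σ 0) (q + 1) (single (Fin.tail σ) 1) := by
      rw [cone_single, Fin.cons_self_tail]
    rw [LinearMap.comp_apply, h, bnd_cone_succ, map_sub, bnd_cone (ih _), sub_self]

theorem Equivariant.comp {p q r : ℕ} {F : Chain G q →ₗ[ℤ] Chain G r}
    {F' : Chain G p →ₗ[ℤ] Chain G q} (hF : Equivariant F) (hF' : Equivariant F') :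
    Equivariant (F ∘ₗ F') := fun g c => by
  rw [LinearMap.comp_apply, hF', hF, LinearMap.comp_apply]

theorem Equivariant.sub {p q : ℕ} {F F' : Chain G p →ₗ[ℤ] Chain G q} (hF : Equivariant F)
    (hF' : Equivariant F') : Equivariant (F - F') := fun g c => by
  rw [LinearMap.sub_apply, hF, hF', LinearMap.sub_apply, map_sub]

theorem equivariant_id {q : ℕ} : Equivariant (LinearMap.id : Chain G q →ₗ[ℤ] Chain G q) :=
  fun _ _ => rfl

end Chains

section Simplices

variable {X : Finset G}

theorem wordDist_mul_left (g a b : G) : wordDist X (g * a) (g * b) = wordDist X a b := by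
  unfold wordDist; congr 1; group

theorem wordDist_self (g : G) : wordDist X g g = 0 := by
  unfold wordDist wordLength
  rw [Nat.sInf_eq_zero]
  exact Or.inl ⟨[], rfl, by simp, by simp⟩

theorem ripsSimplices_mono {S T : Set G} {q k l : ℕ} (hST : S ⊆ T) (hkl : k ≤ l) :
    ripsSimplices X S q k ⊆ ripsSimplices X T q l :=
  fun _ h => ⟨fun i => hST (h.1 i), fun i j => (h.2 i j).trans hkl⟩

theorem VRChain.mono {S T : Set G} {q k l : ℕ} {c : Chain G q} (hc : VRChain X S q k c)
    (hST : S ⊆ T) (hkl : k ≤ l) : VRChain X T q l c :=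
  fun σ hσ => ripsSimplices_mono hST hkl (hc σ hσ)

theorem VRChain.bnd {S : Set G} {q k : ℕ} {c : Chain G (q + 1)} (hc : VRChain X S (q + 1) k c) :
    VRChain X S q k (bnd q c) := by
  rw [vrChain_iff]
  refine map_mem_of_supported (F := _root_.bnd q) (fun σ hσ => ?_) (vrChain_iff.1 hc)
  rw [bnd_single]
  refine Submodule.sum_mem _ fun i _ => Submodule.smul_mem _ _ ?_
  exact single_mem_supported _ _ ⟨fun j => hσ.1 _, fun j j' => hσ.2 _ _⟩

theorem VRChain.single {S : Set G} {q k : ℕ} {σ : Fin (q + 1) → G}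
    (hσ : σ ∈ ripsSimplices X S q k) : VRChain X S q k (single σ 1) :=
  vrChain_iff.2 (single_mem_supported _ _ hσ)

theorem VRChain.lTranslate {S T : Set G} {q k : ℕ} {c : Chain G q} (hc : VRChain X S q k c)
    (g : G) (hg : ∀ s ∈ S, g * s ∈ T) : VRChain X T q k (lTranslate g q c) := by
  rw [vrChain_iff]
  refine map_mem_of_supported (F := _root_.lTranslate g q) (fun σ hσ => ?_) (vrChain_iff.1 hc)
  rw [lTranslate_single]
  exact single_mem_supported _ _
    ⟨fun j => hg _ (hσ.1 j), fun j j' => (wordDist_mul_left _ _ _).trans_le (hσ.2 _ _)⟩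

theorem lTranslate_mem_supported {S T : Set G} {q : ℕ} {c : Chain G q}
    (hc : c ∈ supported ℤ ℤ (simplicesIn S q)) (g : G) (hg : ∀ s ∈ S, g * s ∈ T) :
    lTranslate g q c ∈ supported ℤ ℤ (simplicesIn T q) := by
  refine map_mem_of_supported (fun σ hσ => ?_) hc
  rw [lTranslate_single]
  exact single_mem_supported _ _ fun j => hg _ (hσ j)

theorem cone_mem_supported {S : Set G} {q : ℕ} {c : Chain G q}
    (hc : c ∈ supported ℤ ℤ (simplicesIn S q)) {v : G} (hv : v ∈ S) :
    cone v q c ∈ supported ℤ ℤ (simplicesIn S (q + 1)) := by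
  refine map_mem_of_supported (fun σ hσ => ?_) hc
  rw [cone_single]
  refine single_mem_supported _ _ fun j => ?_
  refine Fin.cases ?_ (fun i => ?_) j
  · exact hv
  · exact hσ i

theorem VRChain.mem_supported {S : Set G} {q k : ℕ} {c : Chain G q} (hc : VRChain X S q k c) :
    c ∈ supported ℤ ℤ (simplicesIn S q) :=
  fun σ hσ => (hc σ hσ).1

/-- Balls of the word metric are finite. -/
theorem finite_ball (hX : Subgroup.closure (X : Set G) = ⊤) (n : ℕ) :
    {g : G | wordLength X g ≤ n}.Finite := by
  have hY : Finite {x : G // x ∈ X ∨ x⁻¹ ∈ X} := by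
    have : {x : G | x ∈ X ∨ x⁻¹ ∈ X}.Finite :=
      X.finite_toSet.union (X.finite_toSet.preimage inv_injective.injOn)
    exact this
  refine ((List.finite_length_le {x : G // x ∈ X ∨ x⁻¹ ∈ X} n).image
    fun w => (w.map Subtype.val).prod).subset fun g hg => ?_
  have hne : {n : ℕ | ∃ w : List G, w.length = n ∧ (∀ x ∈ w, x ∈ X ∨ x⁻¹ ∈ X) ∧
      w.prod = g}.Nonempty := by
    have hg' : g ∈ (Subgroup.closure (X : Set G)).toSubmonoid := by rw [hX]; trivial
    rw [Subgroup.closure_toSubmonoid] at hg'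
    obtain ⟨w, hw, rfl⟩ := Submonoid.exists_list_of_mem_closure hg'
    exact ⟨_, w, rfl, hw, rfl⟩
  obtain ⟨w, hlen, hw, rfl⟩ := Nat.sInf_mem hne
  lift w to List {x : G // x ∈ X ∨ x⁻¹ ∈ X} using hw
  refine ⟨w, ?_, rfl⟩
  rw [List.length_map] at hlen
  exact hlen.trans_le hg

/-- The image of a simplex under an equivariant map stays within a bounded distance of it. -/
theorem Equivariant.exists_finite (hX : Subgroup.closure (X : Set G) = ⊤) {p q : ℕ}
    {F : Chain G p →ₗ[ℤ] Chain G q} (hF : Equivariant F) (k : ℕ) :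
    ∃ B : Set G, B.Finite ∧ ∀ σ ∈ ripsSimplices X Set.univ p k,
      ∀ τ ∈ (F (Finsupp.single σ 1)).support,
        (∀ i j, (σ i)⁻¹ * τ j ∈ B) ∧ ∀ i j, (τ i)⁻¹ * τ j ∈ B := by
  let A : Set (Fin (p + 1) → G) := {σ | ∀ i, wordLength X (σ i) ≤ k}
  have hA : A.Finite := by
    have := Set.Finite.pi' (ι := Fin (p + 1)) (fun _ => finite_ball hX k)
    exact this
  have hT : (⋃ σ ∈ A, ({σ} : Set (Fin (p + 1) → G)) ×ˢ
      ((F (Finsupp.single σ 1)).support : Set (Fin (q + 1) → G))).Finite :=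
    hA.biUnion fun σ _ => (Set.finite_singleton σ).prod (Finset.finite_toSet _)
  refine ⟨⋃ x ∈ (⋃ σ ∈ A, ({σ} : Set (Fin (p + 1) → G)) ×ˢ
      ((F (Finsupp.single σ 1)).support : Set (Fin (q + 1) → G))),
      (Set.range fun y : Fin (p + 1) × Fin (q + 1) => (x.1 y.1)⁻¹ * x.2 y.2) ∪
      Set.range fun y : Fin (q + 1) × Fin (q + 1) => (x.2 y.1)⁻¹ * x.2 y.2,
    hT.biUnion fun x _ => (Set.finite_range _).union (Set.finite_range _), fun σ hσ τ hτ => ?_⟩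
  have hσ' : (fun i => (σ 0)⁻¹ * σ i) ∈ A := fun i => hσ.2 0 i
  have hτ' : (fun i => (σ 0)⁻¹ * τ i) ∈
      (F (Finsupp.single (fun i => (σ 0)⁻¹ * σ i) 1)).support := by
    rw [← lTranslate_single, hF]
    have hinj : Function.Injective fun (τ : Fin (q + 1) → G) i => (σ 0)⁻¹ * τ i :=
      fun a b hab => funext fun i => mul_left_cancel (congrFun hab i)
    rw [mem_support_iff] at hτ ⊢
    rwa [_root_.lTranslate, lmapDomain_apply, mapDomain_apply hinj]
  refine ⟨fun i j => ?_, fun i j => ?_⟩ <;>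
    refine Set.mem_biUnion (Set.mem_biUnion hσ' (Set.mk_mem_prod rfl hτ')) ?_
  · exact Or.inl ⟨(i, j), by simp⟩
  · exact Or.inr ⟨(i, j), by simp⟩

/-- Equivariant maps send chains of bounded scale to chains of bounded scale. -/
theorem Equivariant.exists_scale (hX : Subgroup.closure (X : Set G) = ⊤) {p q : ℕ}
    {F : Chain G p →ₗ[ℤ] Chain G q} (hF : Equivariant F) (k : ℕ) :
    ∃ l, ∀ c, VRChain X Set.univ p k c → ∀ S, F c ∈ supported ℤ ℤ (simplicesIn S q) →
      VRChain X S q l (F c) := by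
  obtain ⟨B, hB, hBF⟩ := hF.exists_finite hX k
  obtain ⟨l, hl⟩ := (hB.image (wordLength X)).bddAbove
  refine ⟨l, fun c hc S hS τ hτ => ⟨hS hτ, fun i j => ?_⟩⟩
  have : F c ∈ supported ℤ ℤ (ripsSimplices X Set.univ q l) :=
    map_mem_of_supported (fun σ hσ τ hτ =>
      ⟨fun _ => trivial, fun i j => hl ⟨_, (hBF σ hσ τ hτ).2 i j, rfl⟩⟩) (vrChain_iff.1 hc)
  exact (this hτ).2 i j

/-- Equivariant choice of fillings. -/
theorem Equivariant.exists_lift {p q : ℕ} {f : Chain G p →ₗ[ℤ] Chain G q} (hf : Equivariant f)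
    {A : Set (Fin (p + 1) → G)} (hA : ∀ (g : G), ∀ σ ∈ A, (fun i => g * σ i) ∈ A)
    {P : (Fin (p + 1) → G) → Chain G (q + 1) → Prop}
    (hP : ∀ g σ c, P σ c → P (fun i => g * σ i) (_root_.lTranslate g (q + 1) c))
    (h : ∀ σ ∈ A, ∃ c, P σ c ∧ _root_.bnd q c = f (Finsupp.single σ 1)) :
    ∃ F : Chain G p →ₗ[ℤ] Chain G (q + 1), Equivariant F ∧
      ∀ σ ∈ A, P σ (F (Finsupp.single σ 1)) ∧
        _root_.bnd q (F (Finsupp.single σ 1)) = f (Finsupp.single σ 1) := by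
  classical
  let e : (Fin (p + 1) → G) → Chain G (q + 1) := fun σ =>
    if h' : σ ∈ A then (h σ h').choose else 0
  let F : Chain G p →ₗ[ℤ] Chain G (q + 1) := Finsupp.lift _ ℤ _ fun σ =>
    _root_.lTranslate (σ 0) (q + 1) (e fun i => (σ 0)⁻¹ * σ i)
  have hFs : ∀ σ, F (Finsupp.single σ 1) =
      _root_.lTranslate (σ 0) (q + 1) (e fun i => (σ 0)⁻¹ * σ i) := fun σ => by simp [F]
  refine ⟨F, fun g c => ?_, fun σ hσ => ?_⟩
  · refine map_eq_of_supported (F := F ∘ₗ _root_.lTranslate g p)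
      (F' := _root_.lTranslate g (q + 1) ∘ₗ F) (s := Set.univ) (fun σ _ => ?_) (by simp)
    simp only [LinearMap.comp_apply, lTranslate_single, hFs, lTranslate_mul]
    congr 3
    ext i
    group
  · have hσ' := hA (σ 0)⁻¹ σ hσ
    have he : e (fun i => (σ 0)⁻¹ * σ i) = (h _ hσ').choose := dif_pos hσ'
    have hs := (h _ hσ').choose_spec
    rw [← he] at hs
    rw [hFs]
    constructor
    · simpa using hP (σ 0) _ _ hs.1
    · rw [bnd_equivariant, hs.2, ← hf, lTranslate_single]
      simp

end Simplices

section Characters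

variable {χ : G → ℝ}

theorem IsCharacter.map_one (h : IsCharacter χ) : χ 1 = 0 := by
  have := h 1 1
  rw [mul_one] at this
  linarith

theorem IsCharacter.map_inv (h : IsCharacter χ) (g : G) : χ g⁻¹ = -χ g := by
  have := h g⁻¹ g
  rw [inv_mul_cancel, h.map_one] at this
  linarith

theorem IsCharacter.map_zpow (h : IsCharacter χ) (g : G) (n : ℤ) : χ (g ^ n) = n * χ g := by
  have := _root_.map_zpow (MonoidHom.mk' (M := G) (G := Multiplicative ℝ)
    (fun g => Multiplicative.ofAdd (χ g)) h) g n
  rw [← zsmul_eq_mul]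
  exact congrArg Multiplicative.toAdd this

theorem IsCharacter.exists_pos (h : IsCharacter χ) (h0 : χ ≠ 0) : ∃ t, 0 < χ t := by
  obtain ⟨g, hg⟩ := Function.ne_iff.1 h0
  rcases lt_or_gt_of_ne hg with hg | hg
  · exact ⟨g⁻¹, by rw [h.map_inv]; simpa using hg⟩
  · exact ⟨g, hg⟩

theorem IsCharacter.add_of_inv_mul (h : IsCharacter χ) (a b : G) : χ b = χ a + χ (a⁻¹ * b) := by
  rw [← h, mul_inv_cancel_left]

theorem halfSpace_anti {r s : ℝ} (h : r ≤ s) : halfSpace χ s ⊆ halfSpace χ r :=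
  fun _ hg => h.trans hg

end Characters

section ChainMaps

variable {X : Finset G} {χ : G → ℝ} {m k l κ : ℕ} {a b : ℝ}

/-- `φ` is an equivariant augmented chain map up to degree `m` from scale `k` to scale `κ`
which raises the `χ`-valuation by at least `a`. -/
structure IsRaisingMap (X : Finset G) (χ : G → ℝ) (m k κ : ℕ) (a : ℝ)
    (φ : ∀ q : ℕ, Chain G q →ₗ[ℤ] Chain G q) : Prop where
  equivariant : ∀ q ≤ m, Equivariant (φ q)
  raises : ∀ q ≤ m, ∀ r c, VRChain X (halfSpace χ r) q k c →
    VRChain X (halfSpace χ (r + a)) q κ (φ q c)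
  aug_eq : ∀ c, aug (φ 0 c) = aug c
  comm : ∀ q < m, ∀ c, VRChain X Set.univ (q + 1) k c → bnd q (φ (q + 1) c) = φ q (bnd q c)

theorem VRChain.exists_halfSpace {q : ℕ} {c : Chain G q} (χ : G → ℝ)
    (hc : VRChain X Set.univ q k c) : ∃ r, VRChain X (halfSpace χ r) q k c := by
  have : (⋃ σ ∈ c.support, Set.range fun i => χ (σ i)).Finite :=
    c.support.finite_toSet.biUnion fun σ _ => Set.finite_range _
  obtain ⟨r, hr⟩ := this.bddBelow
  exact ⟨r, fun σ hσ => ⟨fun i => hr (Set.mem_biUnion hσ ⟨i, rfl⟩), (hc σ hσ).2⟩⟩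

variable {φ ψ : ∀ q : ℕ, Chain G q →ₗ[ℤ] Chain G q}

namespace IsRaisingMap

theorem vrChain (h : IsRaisingMap X χ m k κ a φ) {q : ℕ} (hq : q ≤ m) {c : Chain G q}
    (hc : VRChain X Set.univ q k c) : VRChain X Set.univ q κ (φ q c) := by
  obtain ⟨r, hr⟩ := hc.exists_halfSpace χ
  exact (h.raises q hq r c hr).mono (Set.subset_univ _) le_rfl

theorem isCyc (h : IsRaisingMap X χ m k κ a φ) {q : ℕ} (hq : q ≤ m) {c : Chain G q}
    (hc : VRChain X Set.univ q k c) (hcyc : IsCyc q c) : IsCyc q (φ q c) := by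
  cases q with
  | zero => exact (h.aug_eq c).trans hcyc
  | succ q =>
    change bnd q c = 0 at hcyc
    change bnd q _ = 0
    rw [h.comm q hq c hc, hcyc, map_zero]

theorem mono (h : IsRaisingMap X χ m k κ a φ) {k' κ' : ℕ} {a' : ℝ} (hk : k' ≤ k) (hκ : κ ≤ κ')
    (ha : a' ≤ a) : IsRaisingMap X χ m k' κ' a' φ where
  equivariant := h.equivariant
  raises q hq r c hc := (h.raises q hq r c (hc.mono subset_rfl hk)).mono
    (halfSpace_anti (by linarith)) hκ
  aug_eq := h.aug_eq
  comm q hq c hc := h.comm q hq c (hc.mono subset_rfl hk)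

theorem comp (h : IsRaisingMap X χ m k κ a φ) (h' : IsRaisingMap X χ m l k b ψ) :
    IsRaisingMap X χ m l κ (a + b) (fun q => φ q ∘ₗ ψ q) where
  equivariant q hq := (h.equivariant q hq).comp (h'.equivariant q hq)
  raises q hq r c hc := by
    have := h.raises q hq _ _ (h'.raises q hq r c hc)
    rwa [add_assoc, add_comm b a] at this
  aug_eq c := by rw [LinearMap.comp_apply, h.aug_eq, h'.aug_eq]
  comm q hq c hc := by
    rw [LinearMap.comp_apply, LinearMap.comp_apply, h.comm q hq _ (h'.vrChain hq hc),
      h'.comm q hq c hc]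

theorem id : IsRaisingMap X χ m k k 0 (fun _ => LinearMap.id) where
  equivariant _ _ := equivariant_id
  raises q _ r c hc := by simpa using hc
  aug_eq _ := rfl
  comm _ _ _ _ := rfl

theorem pow (h : IsRaisingMap X χ m k k a φ) (n : ℕ) :
    IsRaisingMap X χ m k k (n * a) (fun q => (φ q) ^ n) := by
  induction n with
  | zero =>
    have := id (X := X) (χ := χ) (m := m) (k := k)
    rw [Nat.cast_zero, zero_mul]
    exact this
  | succ n ih =>
    have := h.comp ih
    have e : ((n + 1 : ℕ) : ℝ) * a = a + n * a := by push_cast; ring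
    rw [e]
    simp only [pow_succ']
    exact this

/-- A chain map not lowering the valuation is homotopic to the identity on cycles, through a
homotopy which does not lower the valuation. -/
theorem exists_homotopy (hX : Subgroup.closure (X : Set G) = ⊤) (hχ : IsCharacter χ)
    (h : IsRaisingMap X χ m k κ 0 φ) : ∃ l, ∀ q ≤ m, ∃ H : Chain G q →ₗ[ℤ] Chain G (q + 1),
      (∀ r c, VRChain X (halfSpace χ r) q k c → VRChain X (halfSpace χ r) (q + 1) l (H c)) ∧
      ∀ z, VRChain X Set.univ q k z → IsCyc q z → bnd q (H z) = φ q z - z := by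
  have fill : ∀ (q : ℕ) (f : Chain G q →ₗ[ℤ] Chain G q), Equivariant f →
      (∀ c, VRChain X Set.univ q k c → IsCyc q (f c)) →
      (∀ r c, VRChain X (halfSpace χ r) q k c →
        f c ∈ supported ℤ ℤ (simplicesIn (halfSpace χ r) q)) →
      ∃ H : Chain G q →ₗ[ℤ] Chain G (q + 1), Equivariant H ∧
        (∀ r c, VRChain X (halfSpace χ r) q k c →
          H c ∈ supported ℤ ℤ (simplicesIn (halfSpace χ r) (q + 1))) ∧
        ∀ c, VRChain X Set.univ q k c → bnd q (H c) = f c := by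
    intro q f hf hcyc hsupp
    obtain ⟨H, hH, hHs⟩ := hf.exists_lift (A := ripsSimplices X Set.univ q k)
      (P := fun σ c => ∀ r, (∀ i, r ≤ χ (σ i)) →
        c ∈ supported ℤ ℤ (simplicesIn (halfSpace χ r) (q + 1)))
      (fun g σ hσ => ⟨fun _ => trivial,
        fun i j => (wordDist_mul_left _ _ _).trans_le (hσ.2 _ _)⟩)
      (fun g σ c hc r hr => by
        refine lTranslate_mem_supported (hc (r - χ g) fun i => ?_) g fun s hs => ?_
        · have := hr i
          rw [hχ] at this
          linarith
        · change r - χ g ≤ χ s at hs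
          change r ≤ χ (g * s)
          rw [hχ]
          linarith)
      (fun σ hσ => ⟨cone (σ 0) q (f (single σ 1)), fun r hr =>
        cone_mem_supported (hsupp r _ (VRChain.single ⟨hr, hσ.2⟩)) (hr 0),
        bnd_cone (hcyc _ (VRChain.single hσ)) _⟩)
    refine ⟨H, hH, fun r c hc => ?_, fun c hc => ?_⟩
    · exact map_mem_of_supported
        (fun σ hσ => (hHs σ ⟨fun _ => trivial, hσ.2⟩).1 r hσ.1) (vrChain_iff.1 hc)
    · exact map_eq_of_supported (F := bnd q ∘ₗ H) (fun σ hσ => (hHs σ hσ).2) (vrChain_iff.1 hc)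
  have key : ∀ q ≤ m, ∃ H : Chain G q →ₗ[ℤ] Chain G (q + 1), Equivariant H ∧
      (∀ r c, VRChain X (halfSpace χ r) q k c →
        H c ∈ supported ℤ ℤ (simplicesIn (halfSpace χ r) (q + 1))) ∧
      ∀ z, VRChain X Set.univ q k z → IsCyc q z → bnd q (H z) = φ q z - z := by
    have hsub : ∀ q ≤ m, ∀ r c, VRChain X (halfSpace χ r) q k c →
        (φ q - LinearMap.id : _ →ₗ[ℤ] _) c ∈
          supported ℤ ℤ (simplicesIn (halfSpace χ r) q) := by
      intro q hq r c hc
      have := h.raises q hq r c hc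
      rw [add_zero] at this
      exact Submodule.sub_mem _ this.mem_supported hc.mem_supported
    intro q
    induction q with
    | zero =>
      intro hq
      obtain ⟨H, hH, hHs, hHb⟩ := fill 0 (φ 0 - LinearMap.id)
        ((h.equivariant 0 hq).sub equivariant_id) (fun c _ => by
          change aug (φ 0 c - c) = 0
          rw [map_sub, h.aug_eq, sub_self]) (hsub 0 hq)
      exact ⟨H, hH, hHs, fun z hz _ => hHb z hz⟩
    | succ q ih =>
      intro hq
      obtain ⟨H, hH, hHs, hHb⟩ := ih (by omega)
      obtain ⟨H', hH', hHs', hHb'⟩ := fill (q + 1) (φ (q + 1) - LinearMap.id - H ∘ₗ bnd q)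
        (((h.equivariant _ hq).sub equivariant_id).sub (hH.comp (bnd_equivariant q)))
        (fun c hc => by
          change bnd q (φ (q + 1) c - c - H (bnd q c)) = 0
          rw [map_sub, map_sub, h.comm q hq c hc, hHb _ hc.bnd (isCyc_bnd q c), sub_self])
        (fun r c hc => Submodule.sub_mem _ (hsub _ hq r c hc) (hHs r _ hc.bnd))
      refine ⟨H', hH', hHs', fun z hz hcyc => ?_⟩
      change bnd q z = 0 at hcyc
      rw [hHb' z hz]
      simp [hcyc]
  have key' : ∀ q, ∃ l, q ≤ m → ∃ H : Chain G q →ₗ[ℤ] Chain G (q + 1),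
      (∀ r c, VRChain X (halfSpace χ r) q k c → VRChain X (halfSpace χ r) (q + 1) l (H c)) ∧
      ∀ z, VRChain X Set.univ q k z → IsCyc q z → bnd q (H z) = φ q z - z := by
    intro q
    by_cases hq : q ≤ m
    · obtain ⟨H, hH, hHs, hHb⟩ := key q hq
      obtain ⟨l, hl⟩ := hH.exists_scale hX k
      exact ⟨l, fun _ => ⟨H, fun r c hc => hl c (hc.mono (Set.subset_univ _) le_rfl) _ (hHs r c hc),
        hHb⟩⟩
    · exact ⟨0, fun h => absurd h hq⟩
  choose l hl using key'
  refine ⟨(Finset.range (m + 1)).sup l, fun q hq => ?_⟩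
  obtain ⟨H, hH, hHb⟩ := hl q hq
  exact ⟨H, fun r c hc => (hH r c hc).mono subset_rfl
    (Finset.le_sup (Finset.mem_range.2 (by omega))), hHb⟩

/-- The images of simplices under all components of a chain map stay within a uniformly bounded
distance of the simplices. -/
theorem exists_finite (hX : Subgroup.closure (X : Set G) = ⊤) (h : IsRaisingMap X χ m k κ a φ) :
    ∃ B : Set G, B.Finite ∧ ∀ q ≤ m, ∀ σ ∈ ripsSimplices X Set.univ q k,
      ∀ τ ∈ (φ q (single σ 1)).support, ∀ i j, (σ i)⁻¹ * τ j ∈ B := by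
  have : ∀ q, ∃ B : Set G, B.Finite ∧ (q ≤ m → ∀ σ ∈ ripsSimplices X Set.univ q k,
      ∀ τ ∈ (φ q (single σ 1)).support, ∀ i j, (σ i)⁻¹ * τ j ∈ B) := by
    intro q
    by_cases hq : q ≤ m
    · obtain ⟨B, hB, hBF⟩ := (h.equivariant q hq).exists_finite hX k
      exact ⟨B, hB, fun _ σ hσ τ hτ => (hBF σ hσ τ hτ).1⟩
    · exact ⟨∅, Set.finite_empty, fun h => absurd h hq⟩
  choose B hB hBF using this
  exact ⟨⋃ q ∈ Set.Iic m, B q, (Set.finite_Iic m).biUnion fun q _ => hB q,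
    fun q hq σ hσ τ hτ i j => Set.mem_biUnion (Set.mem_Iic.2 hq) (hBF q hq σ hσ τ hτ i j)⟩

/-- Changing the character: it suffices to control the valuation on simplices. -/
theorem of_simplices {χ' : G → ℝ} {a' : ℝ} (h : IsRaisingMap X χ m k κ a φ)
    (hs : ∀ q ≤ m, ∀ σ ∈ ripsSimplices X Set.univ q k, ∀ τ ∈ (φ q (single σ 1)).support,
      ∀ j, ∃ i, χ' (σ i) + a' ≤ χ' (τ j)) : IsRaisingMap X χ' m k κ a' φ where
  equivariant := h.equivariant
  raises q hq r c hc := by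
    refine vrChain_iff.2 (map_mem_of_supported (fun σ hσ τ hτ => ?_) (vrChain_iff.1 hc))
    have hσ' : σ ∈ ripsSimplices X Set.univ q k := ⟨fun _ => trivial, hσ.2⟩
    refine ⟨fun j => ?_, (h.vrChain hq (VRChain.single hσ') τ hτ).2⟩
    obtain ⟨i, hi⟩ := hs q hq σ hσ' τ hτ j
    exact (add_le_add_left (hσ.1 i) a').trans hi
  aug_eq := h.aug_eq
  comm := h.comm

/-- For every character the loss of valuation is bounded. -/
theorem exists_loss (hX : Subgroup.closure (X : Set G) = ⊤) (h : IsRaisingMap X χ m k κ a φ)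
    {χ' : G → ℝ} (hχ' : IsCharacter χ') : ∃ a', IsRaisingMap X χ' m k κ a' φ := by
  obtain ⟨B, hB, hBφ⟩ := h.exists_finite hX
  obtain ⟨a', ha'⟩ := (hB.image χ').bddBelow
  refine ⟨a', h.of_simplices fun q hq σ hσ τ hτ j => ⟨0, ?_⟩⟩
  rw [hχ'.add_of_inv_mul (σ 0) (τ j)]
  linarith [ha' ⟨_, hBφ q hq σ hσ τ hτ 0 j, rfl⟩]

/-- Raising the valuation by a definite amount persists for nearby characters. -/
theorem exists_nhds (hX : Subgroup.closure (X : Set G) = ⊤) (h : IsRaisingMap X χ m k κ 1 φ)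
    (hχ : IsCharacter χ) : ∃ B : Set G, B.Finite ∧ ∀ χ' : G → ℝ, IsCharacter χ' →
      (∀ g ∈ B, |χ' g - χ g| < 1 / 2) → IsRaisingMap X χ' m k κ (1 / 2) φ := by
  obtain ⟨B, hB, hBφ⟩ := h.exists_finite hX
  refine ⟨B, hB, fun χ' hχ' hB' => h.of_simplices fun q hq σ hσ τ hτ j => ?_⟩
  obtain ⟨i, hi⟩ := Finite.exists_min fun i => χ (σ i)
  refine ⟨i, ?_⟩
  have h1 : χ (σ i) + 1 ≤ χ (τ j) :=
    (h.raises q hq (χ (σ i)) _ (VRChain.single ⟨hi, hσ.2⟩) τ hτ).1 j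
  have h2 := (abs_lt.1 (hB' _ (hBφ q hq σ hσ τ hτ i j))).1
  rw [hχ.add_of_inv_mul (σ i) (τ j)] at h1
  rw [hχ'.add_of_inv_mul (σ i) (τ j)]
  linarith

end IsRaisingMap

end ChainMaps

theorem exists_seq_of_step {α : ℕ → Type*} {m : ℕ} {P : ∀ q, α q → Prop}
    {R : ∀ q, α q → α (q + 1) → Prop} [∀ q, Nonempty (α q)] {a : α 0} (ha : P 0 a)
    (hs : ∀ q < m, ∀ a, P q a → ∃ b, P (q + 1) b ∧ R q a b) :
    ∃ φ : ∀ q, α q, φ 0 = a ∧ (∀ q ≤ m, P q (φ q)) ∧ ∀ q < m, R q (φ q) (φ (q + 1)) := by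
  have : ∀ q a, ∃ b, q < m → P q a → P (q + 1) b ∧ R q a b := by
    intro q a
    by_cases h : q < m ∧ P q a
    · obtain ⟨b, hb⟩ := hs q h.1 a h.2
      exact ⟨b, fun _ _ => hb⟩
    · exact ⟨Classical.arbitrary _, fun h1 h2 => absurd ⟨h1, h2⟩ h⟩
  choose step hstep using this
  let φ : ∀ q, α q := fun q => Nat.rec a step q
  have hP : ∀ q ≤ m, P q (φ q) := by
    intro q
    induction q with
    | zero => exact fun _ => ha
    | succ q ih => exact fun hq => (hstep q (φ q) (by omega) (ih (by omega))).1
  exact ⟨φ, rfl, hP, fun q hq => (hstep q (φ q) hq (hP q hq.le)).2⟩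

section Construction

variable {X : Finset G} {χ : G → ℝ} {m : ℕ}

/-- Cycles in upper half spaces bound with a uniform loss `D` of valuation. -/
def FillsHalfSpaces (X : Finset G) (χ : G → ℝ) (m : ℕ) (D : ℝ) : Prop :=
  ∀ q < m, ∀ k : ℕ, ∃ l ≥ k, ∀ r (z : Chain G q), VRChain X (halfSpace χ r) q k z → IsCyc q z →
    ∃ c : Chain G (q + 1), VRChain X (halfSpace χ (r - D)) (q + 1) l c ∧ bnd q c = z

theorem fillsHalfSpaces_zero (h : TypeFP X Set.univ m) :
    FillsHalfSpaces X (fun _ : G => 0) m 0 := by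
  intro q hq k
  obtain ⟨l, hl, hb⟩ := h q hq k
  refine ⟨l, hl, fun r z hz hcyc => ?_⟩
  rcases le_or_gt r 0 with hr | hr
  · obtain ⟨c, hc, rfl⟩ := boundsAt_iff.1 hb z (hz.mono (Set.subset_univ _) le_rfl) hcyc
    refine ⟨c, hc.mono (fun g _ => ?_) le_rfl, rfl⟩
    change r - 0 ≤ 0
    simpa using hr
  · have : z = 0 := by
      rw [← support_eq_empty, Finset.eq_empty_iff_forall_notMem]
      intro σ hσ
      exact hr.not_ge ((hz σ hσ).1 0)
    subst this
    exact ⟨0, fun σ hσ => by simp at hσ, map_zero _⟩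

theorem fillsHalfSpaces_of_pos (hχ : IsCharacter χ) {t : G} (ht : 0 < χ t)
    (h : TypeFP X {g | 0 ≤ χ g} m) : FillsHalfSpaces X χ m (χ t) := by
  intro q hq k
  obtain ⟨l, hl, hb⟩ := h q hq k
  refine ⟨l, hl, fun r z hz hcyc => ?_⟩
  obtain ⟨g, hg, hg'⟩ : ∃ g, χ g ≤ r ∧ r - χ t ≤ χ g := by
    refine ⟨t ^ ⌊r / χ t⌋, ?_, ?_⟩ <;> rw [hχ.map_zpow]
    · exact (le_div_iff₀ ht).1 (Int.floor_le _)
    · have := (div_lt_iff₀ ht).1 (Int.lt_floor_add_one (r / χ t))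
      linarith
  obtain ⟨c, hc, hcz⟩ := boundsAt_iff.1 hb (lTranslate g⁻¹ q z)
    (hz.lTranslate g⁻¹ fun s (hs : r ≤ χ s) => by
      change 0 ≤ χ (g⁻¹ * s)
      rw [hχ, hχ.map_inv]
      linarith) (hcyc.lTranslate _)
  refine ⟨lTranslate g (q + 1) c, hc.lTranslate g fun s (hs : 0 ≤ χ s) => ?_, ?_⟩
  · change r - χ t ≤ χ (g * s)
    rw [hχ]
    linarith
  · rw [bnd_equivariant, hcz, ← lTranslate_mul, mul_inv_cancel, lTranslate_one]

/-- The target scale `κ` and the loss `C` depend neither on the source scale nor on `t`. -/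
theorem FillsHalfSpaces.exists_isRaisingMap (hχ : IsCharacter χ) {D : ℝ} (hD : 0 ≤ D)
    (h : FillsHalfSpaces X χ m D) :
    ∃ (κ : ℕ) (C : ℝ), ∀ (t : G) (k : ℕ), ∃ φ, IsRaisingMap X χ m k κ (χ t - C) φ := by
  have hl : ∀ q k, ∃ l ≥ k, q < m → ∀ r (z : Chain G q), VRChain X (halfSpace χ r) q k z →
      IsCyc q z → ∃ c : Chain G (q + 1),
        VRChain X (halfSpace χ (r - D)) (q + 1) l c ∧ bnd q c = z := by
    intro q k
    by_cases hq : q < m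
    · obtain ⟨l, hl, hb⟩ := h q hq k
      exact ⟨l, hl, fun _ => hb⟩
    · exact ⟨k, le_rfl, fun h => absurd h hq⟩
  choose l hlk hl using hl
  let κ : ℕ → ℕ := fun q => Nat.rec 0 l q
  have hκ : Monotone κ := monotone_nat_of_le_succ fun q => hlk q (κ q)
  refine ⟨κ m, m * D, fun t k => ?_⟩
  let ρ : Chain G 0 →ₗ[ℤ] Chain G 0 := Finsupp.lmapDomain ℤ ℤ (fun σ i => σ i * t)
  have hρs : ∀ σ, ρ (single σ 1) = single (fun i => σ i * t) 1 := fun σ => by simp [ρ]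
  have hρ : ∀ c, aug (ρ c) = aug c := fun c =>
    map_eq_of_supported (F := aug ∘ₗ ρ) (F' := aug) (s := Set.univ)
      (fun σ _ => by rw [LinearMap.comp_apply, hρs, aug_single, aug_single]) (by simp)
  have hρe : Equivariant ρ := fun g c =>
    map_eq_of_supported (F := ρ ∘ₗ lTranslate g 0) (F' := lTranslate g 0 ∘ₗ ρ) (s := Set.univ)
      (fun σ _ => by simp only [LinearMap.comp_apply, lTranslate_single, hρs, mul_assoc]) (by simp)
  let P : ∀ q, (Chain G q →ₗ[ℤ] Chain G q) → Prop := fun q φ =>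
    Equivariant φ ∧
      (∀ r c, VRChain X (halfSpace χ r) q k c →
        VRChain X (halfSpace χ (r + (χ t - q * D))) q (κ q) (φ c)) ∧
      ∀ z, VRChain X Set.univ q k z → IsCyc q z → IsCyc q (φ z)
  have h0 : P 0 ρ := by
    refine ⟨hρe, fun r c hc => ?_, fun z _ hz => ?_⟩
    · rw [vrChain_iff]
      refine map_mem_of_supported (fun σ hσ => ?_) (vrChain_iff.1 hc)
      rw [hρs]
      refine single_mem_supported _ _ ⟨fun i => ?_, fun i j => ?_⟩
      · have : r ≤ χ (σ i) := hσ.1 i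
        change r + (χ t - (0 : ℕ) * D) ≤ χ (σ i * t)
        rw [hχ]
        simpa using this
      · rw [show i = j from Subsingleton.elim (α := Fin 1) i j, wordDist_self]
        exact Nat.zero_le _
    · exact (hρ z).trans hz
  have hs : ∀ q < m, ∀ φ, P q φ → ∃ φ', P (q + 1) φ' ∧
      ∀ c, VRChain X Set.univ (q + 1) k c → bnd q (φ' c) = φ (bnd q c) := by
    rintro q hq φ ⟨hφ, hφr, hφc⟩
    obtain ⟨F, hF, hFs⟩ := (hφ.comp (bnd_equivariant q)).exists_lift
      (A := ripsSimplices X Set.univ (q + 1) k)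
      (P := fun σ c => ∀ r, (∀ i, r ≤ χ (σ i)) →
        VRChain X (halfSpace χ (r + (χ t - (q + 1 : ℕ) * D))) (q + 1) (κ (q + 1)) c)
      (fun g σ hσ => ⟨fun _ => trivial,
        fun i j => (wordDist_mul_left _ _ _).trans_le (hσ.2 _ _)⟩)
      (fun g σ c hc r hr => by
        refine (hc (r - χ g) fun i => ?_).lTranslate g
          fun s (hs : r - χ g + (χ t - (q + 1 : ℕ) * D) ≤ χ s) => ?_
        · have := hr i
          rw [hχ] at this
          linarith
        · change r + (χ t - (q + 1 : ℕ) * D) ≤ χ (g * s)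
          rw [hχ]
          linarith)
      (fun σ hσ => by
        obtain ⟨i, hi⟩ := Finite.exists_min fun i => χ (σ i)
        have hσi : VRChain X (halfSpace χ (χ (σ i))) (q + 1) k (single σ 1) :=
          VRChain.single ⟨hi, hσ.2⟩
        obtain ⟨c, hc, hcb⟩ := hl q (κ q) hq _ _ (hφr _ _ hσi.bnd)
          (hφc _ (VRChain.single hσ).bnd (isCyc_bnd q _))
        refine ⟨c, fun r hr => hc.mono (halfSpace_anti ?_) le_rfl, hcb⟩
        have := hr i
        push_cast
        linarith)
    have hR : ∀ c, VRChain X Set.univ (q + 1) k c → bnd q (F c) = φ (bnd q c) := fun c hc =>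
      map_eq_of_supported (F := bnd q ∘ₗ F) (F' := φ ∘ₗ bnd q)
        (fun σ hσ => (hFs σ hσ).2) (vrChain_iff.1 hc)
    refine ⟨F, ⟨hF, fun r c hc => ?_, fun z hz hcyc => ?_⟩, hR⟩
    · exact vrChain_iff.2 (map_mem_of_supported
        (fun σ hσ => (hFs σ ⟨fun _ => trivial, hσ.2⟩).1 r hσ.1) (vrChain_iff.1 hc))
    · change bnd q z = 0 at hcyc
      change bnd q (F z) = 0
      rw [hR z hz, hcyc, map_zero]
  obtain ⟨φ, hφ0, hP, hR⟩ := exists_seq_of_step (P := P) h0 hs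
  refine ⟨φ, fun q hq => (hP q hq).1, fun q hq r c hc => ?_, fun c => hφ0 ▸ hρ c, hR⟩
  refine ((hP q hq).2.1 r c hc).mono (halfSpace_anti ?_) (hκ hq)
  have : (q : ℝ) * D ≤ m * D := by gcongr
  linarith

/-- The sufficiency half of the valuation criterion: if chains of every scale can be mapped to
scale `κ`, and some chain endomorphism at scale `κ` strictly raises the `χ`-valuation, then the
half space of `χ` inherits its finiteness type from the group. -/
theorem typeFP_of_isRaisingMap (hX : Subgroup.closure (X : Set G) = ⊤) (hχ : IsCharacter χ)
    (hFP : TypeFP X Set.univ m) {κ : ℕ} {a : ℝ} (ha : 0 < a)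
    {φ : ∀ q : ℕ, Chain G q →ₗ[ℤ] Chain G q} (hφ : IsRaisingMap X χ m κ κ a φ)
    (hψ : ∀ k, ∃ (b : ℝ) (ψ : ∀ q : ℕ, Chain G q →ₗ[ℤ] Chain G q), IsRaisingMap X χ m k κ b ψ) :
    TypeFP X {g | 0 ≤ χ g} m := by
  change TypeFP X (halfSpace χ 0) m
  intro q hq k
  obtain ⟨k', hk', hfill⟩ := hFP q hq k
  rw [boundsAt_iff] at hfill
  obtain ⟨b, ψ, hψ⟩ := hψ k'
  obtain ⟨n, hn⟩ := exists_nat_ge (-b / a)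
  have hn' : 0 ≤ n * a + b := by
    have := (div_le_iff₀ ha).1 hn
    linarith
  have hΦ := ((hφ.pow n).comp hψ).mono le_rfl le_rfl hn'
  set Φ : ∀ q : ℕ, Chain G q →ₗ[ℤ] Chain G q := fun q => (φ q ^ n) ∘ₗ ψ q
  obtain ⟨l₁, h₁⟩ := hΦ.exists_homotopy hX hχ
  obtain ⟨l₂, h₂⟩ := (hφ.mono le_rfl le_rfl ha.le).exists_homotopy hX hχ
  obtain ⟨H, hHs, hHb⟩ := h₁ q hq.le
  obtain ⟨H', hHs', hHb'⟩ := h₂ q hq.le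
  refine ⟨max (max k κ) (max l₁ l₂), le_trans (le_max_left _ _) (le_max_left _ _), ?_⟩
  rw [boundsAt_iff]
  intro z hz hcyc
  have hzU : VRChain X Set.univ q k z := hz.mono (Set.subset_univ _) le_rfl
  have hz' : VRChain X (halfSpace χ 0) q k' z := hz.mono subset_rfl hk'
  have hzU' : VRChain X Set.univ q k' z := hz'.mono (Set.subset_univ _) le_rfl
  obtain ⟨c, hc, hcz⟩ := hfill z hzU hcyc
  obtain ⟨w, hw, hwb, hwcyc⟩ : ∃ w, VRChain X (halfSpace χ 0) q κ w ∧ w = Φ q z ∧ IsCyc q w :=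
    ⟨_, by simpa using hΦ.raises q hq.le 0 z hz', rfl, hΦ.isCyc hq.le hzU' hcyc⟩
  have hcΦ := hΦ.vrChain hq hc
  obtain ⟨r, hr⟩ := hcΦ.exists_halfSpace χ
  obtain ⟨N, hN⟩ := exists_nat_ge (-r / a)
  have hN' : 0 ≤ r + N * a := by
    have := (div_le_iff₀ ha).1 hN
    linarith
  have hend := ((hφ.pow N).raises (q + 1) hq r _ hr).mono (halfSpace_anti hN') le_rfl
  have hendb : bnd q ((φ (q + 1) ^ N) (Φ (q + 1) c)) = (φ q ^ N) w := by
    rw [(hφ.pow N).comm q hq _ hcΦ, hΦ.comm q hq c hc, hcz, hwb]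
  have hiter : ∀ N : ℕ, ∃ e, VRChain X (halfSpace χ 0) (q + 1) l₂ e ∧
      bnd q e = (φ q ^ N) w - w := by
    intro N
    induction N with
    | zero => exact ⟨0, fun σ hσ => by simp at hσ, by simp⟩
    | succ N ih =>
      obtain ⟨e, he, heb⟩ := ih
      have hwN : VRChain X (halfSpace χ 0) q κ ((φ q ^ N) w) :=
        ((hφ.pow N).raises q hq.le 0 w hw).mono (halfSpace_anti (by positivity)) le_rfl
      refine ⟨e + H' ((φ q ^ N) w), Submodule.add_mem _ (vrChain_iff.1 he)
        (vrChain_iff.1 (hHs' 0 _ hwN)), ?_⟩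
      rw [map_add, heb, hHb' _ (hwN.mono (Set.subset_univ _) le_rfl)
        ((hφ.pow N).isCyc hq.le (hw.mono (Set.subset_univ _) le_rfl) hwcyc), pow_succ',
        Module.End.mul_apply]
      abel
  obtain ⟨e, he, heb⟩ := hiter N
  refine ⟨(φ (q + 1) ^ N) (Φ (q + 1) c) - e - H z, Submodule.sub_mem _ (Submodule.sub_mem _
    (vrChain_iff.1 (hend.mono subset_rfl ?_)) (vrChain_iff.1 (he.mono subset_rfl ?_)))
    (vrChain_iff.1 ((hHs 0 z hz').mono subset_rfl ?_)), ?_⟩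
  · exact le_trans (le_max_right _ _) (le_max_left _ _)
  · exact le_trans (le_max_right _ _) (le_max_right _ _)
  · exact le_trans (le_max_left _ _) (le_max_right _ _)
  · rw [map_sub, map_sub, hendb, heb, hHb z hzU' hcyc, hwb]
    abel

/-- Membership in `Σ^m` of a nonzero character persists on a neighbourhood. -/
theorem exists_finite_forall_typeFP (hX : Subgroup.closure (X : Set G) = ⊤)
    (hFP : TypeFP X Set.univ m) (hχ : IsCharacter χ) (h0 : χ ≠ 0)
    (h : TypeFP X {g | 0 ≤ χ g} m) : ∃ B : Set G, B.Finite ∧ ∀ χ' : G → ℝ, IsCharacter χ' →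
      (∀ g ∈ B, |χ' g - χ g| < 1 / 2) → TypeFP X {g | 0 ≤ χ' g} m := by
  obtain ⟨t, ht⟩ := hχ.exists_pos h0
  have hzero : IsCharacter fun _ : G => (0 : ℝ) := fun _ _ => by simp
  obtain ⟨κ₁, C, hφ⟩ := (fillsHalfSpaces_of_pos hχ ht h).exists_isRaisingMap hχ ht.le
  obtain ⟨κ₂, C', hψ⟩ := (fillsHalfSpaces_zero hFP).exists_isRaisingMap hzero le_rfl
  obtain ⟨n, hn⟩ := exists_nat_ge ((1 + C) / χ t)
  have hn' : 1 ≤ χ (t ^ (n : ℤ)) - C := by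
    rw [hχ.map_zpow]
    have := (div_le_iff₀ ht).1 hn
    push_cast
    linarith
  obtain ⟨φ, hφ⟩ := hφ (t ^ (n : ℤ)) (max κ₁ κ₂)
  obtain ⟨B, hB, hBφ⟩ := (hφ.mono le_rfl (le_max_left κ₁ κ₂) hn').exists_nhds hX hχ
  refine ⟨B, hB, fun χ' hχ' hχB => typeFP_of_isRaisingMap hX hχ' hFP one_half_pos
    (hBφ χ' hχ' hχB) fun k => ?_⟩
  obtain ⟨ψ, hψ⟩ := hψ 1 k
  obtain ⟨b, hb⟩ := hψ.exists_loss hX hχ'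
  exact ⟨b, ψ, hb.mono le_rfl (le_max_right κ₁ κ₂) le_rfl⟩

end Construction

/-- For `G` of type `FP_m`, the invariant `Σ^m(G;ℤ)` is an open cone in `Hom(G,ℝ)`: its set
of nonzero members is open in the topology of pointwise convergence, and it is invariant
under scaling by positive reals. -/
theorem stmt14 {G : Type*} [Group G] (X : Finset G)
    (hX : Subgroup.closure (X : Set G) = ⊤) (m : ℕ)
    (hFP : TypeFP X Set.univ m) :
    IsOpen {χ : {f : G → ℝ // IsCharacter f} |
      χ.1 ≠ 0 ∧ TypeFP X {g : G | 0 ≤ χ.1 g} m} ∧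
    (∀ lam : ℝ, 0 < lam → ∀ χ : G → ℝ, IsCharacter χ →
      (TypeFP X {g : G | 0 ≤ χ g} m ↔ TypeFP X {g : G | 0 ≤ lam * χ g} m)) := by
  refine ⟨isOpen_iff_mem_nhds.2 ?_, fun lam hlam χ _ => ?_⟩
  · rintro ⟨χ, hχ⟩ ⟨h0, h⟩
    obtain ⟨B, hB, hBχ⟩ := exists_finite_forall_typeFP hX hFP hχ h0 h
    have hev : ∀ g : G, Continuous fun χ' : {f : G → ℝ // IsCharacter f} => χ'.1 g :=
      fun g => (continuous_apply g).comp continuous_subtype_val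
    have hne : ∀ᶠ χ' : {f : G → ℝ // IsCharacter f} in nhds ⟨χ, hχ⟩, χ'.1 ≠ 0 :=
      (isOpen_ne.preimage continuous_subtype_val).mem_nhds h0
    have hnear : ∀ᶠ χ' : {f : G → ℝ // IsCharacter f} in nhds ⟨χ, hχ⟩,
        ∀ g ∈ B, |χ'.1 g - χ g| < 1 / 2 := by
      rw [Filter.eventually_all_finite hB]
      intro g _
      have hc : Continuous fun χ' : {f : G → ℝ // IsCharacter f} => |χ'.1 g - χ g| :=
        ((hev g).sub continuous_const).abs
      exact (isOpen_lt hc continuous_const).mem_nhds (by simp)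
    filter_upwards [hne, hnear] with χ' h1 h2
    exact ⟨h1, hBχ χ'.1 χ'.2 h2⟩
  · simp only [mul_nonneg_iff_of_pos_left hlam]
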